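/- arXiv:0805.1664 — 2 statements merged into one kernel-verified Lean document; each statement's English description precedes it below -/
import Mathlib

section
/- (Theorem 5, fair-cut) In the bisection setup satisfying the fair-cut rule, suppose α, β : ℕ → (Fin ℓ → ℝ) satisfy, for every r: α r ∈ Set.Icc (a r) (b r), β r ∈ Set.Icc (a r) (b r), and α r j = β r j for every j ∉ U r. Then the Euclidean distance between α r and β r tends to 0 as r → ∞, i.e., (Σ_j (α r j − β r j)²)^{1/2} → 0; moreover, for every f : (Fin ℓ → ℝ) → ℂ that is continuous on Set.Icc (a 0) (b 0), f (α r) − f (β r) → 0 as r → ∞. -/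
open Filter Topology

/-- If at each step one coordinate of a nonnegative vector is halved and all others are kept,
the value of the halved coordinate tends to `0`. -/
lemma tendsto_halved_coordinate {ι : Type*} [Fintype ι] {w : ℕ → ι → ℝ} {i : ℕ → ι}
    (hw : ∀ r j, 0 ≤ w r j) (hfix : ∀ r j, j ≠ i r → w (r + 1) j = w r j)
    (hhalf : ∀ r, w (r + 1) (i r) = w r (i r) / 2) :
    Tendsto (fun r => w r (i r)) atTop (𝓝 0) := by
  have hstep : ∀ r, w r (i r) = 2 * (∑ j, w r j - ∑ j, w (r + 1) j) := by
    intro r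
    rw [← Finset.sum_sub_distrib, Finset.sum_eq_single (i r)]
    · rw [hhalf]; ring
    · intro j _ hj
      rw [hfix r j hj, sub_self]
    · simp
  have hanti : Antitone fun r => ∑ j, w r j :=
    antitone_nat_of_succ_le fun r => by linarith [hstep r, hw r (i r)]
  have hlim := tendsto_atTop_ciInf hanti
    ⟨0, by rintro _ ⟨r, rfl⟩; exact Finset.sum_nonneg fun j _ => hw r j⟩
  have hdiff := (hlim.sub (hlim.comp (tendsto_add_atTop_nat 1))).const_mul 2
  rw [sub_self, mul_zero] at hdiff
  exact hdiff.congr fun r => (hstep r).symm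

/-- A function continuous on a compact set does not separate two sequences of that set
whose distance tends to `0`. -/
lemma ContinuousOn.tendsto_sub_of_tendsto_dist {X E : Type*} [PseudoMetricSpace X]
    [SeminormedAddCommGroup E] {K : Set X} (hK : IsCompact K) {f : X → E}
    (hf : ContinuousOn f K) {x y : ℕ → X} (hx : ∀ r, x r ∈ K) (hy : ∀ r, y r ∈ K)
    (hxy : Tendsto (fun r => dist (x r) (y r)) atTop (𝓝 0)) :
    Tendsto (fun r => f (x r) - f (y r)) atTop (𝓝 0) := by
  have huc := Metric.uniformContinuousOn_iff.1 (hK.uniformContinuousOn_of_continuous hf)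
  rw [Metric.tendsto_nhds]
  intro ε hε
  obtain ⟨δ, hδ, h⟩ := huc ε hε
  filter_upwards [hxy.eventually_lt_const hδ] with r hr
  rw [dist_zero_right, ← dist_eq_norm]
  exact h _ (hx r) _ (hy r) hr


/-- **Theorem 5, fair-cut.** In the bisection setup with the fair-cut rule, if
`α r, β r` lie in the `r`-th box and agree outside `U r`, then their Euclidean distance
tends to `0`, and `f (α r) - f (β r) → 0` for any `f` continuous on the initial box. -/
theorem theorem5_fair_cut (ℓ : ℕ) (hℓ : 1 ≤ ℓ)
    (a b : ℕ → Fin ℓ → ℝ) (h₀ : ∀ j, a 0 j < b 0 j)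
    (i : ℕ → Fin ℓ) (U : ℕ → Finset (Fin ℓ)) (hUne : ∀ r, (U r).Nonempty)
    (hiU : ∀ r, i r ∈ U r)
    (hfix : ∀ r, ∀ j, j ≠ i r → a (r + 1) j = a r j ∧ b (r + 1) j = b r j)
    (hcut : ∀ r,
      (a (r + 1) (i r) = (a r (i r) + b r (i r)) / 2 ∧ b (r + 1) (i r) = b r (i r)) ∨
      (a (r + 1) (i r) = a r (i r) ∧ b (r + 1) (i r) = (a r (i r) + b r (i r)) / 2))
    (hfair : ∀ r, (b 0 (i r) - a 0 (i r)) / (b r (i r) - a r (i r)) =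
      (U r).inf' (hUne r) (fun j => (b 0 j - a 0 j) / (b r j - a r j)))
    (α β : ℕ → Fin ℓ → ℝ)
    (hα : ∀ r, α r ∈ Set.Icc (a r) (b r)) (hβ : ∀ r, β r ∈ Set.Icc (a r) (b r))
    (hagree : ∀ r, ∀ j, j ∉ U r → α r j = β r j) :
    Filter.Tendsto (fun r => Real.sqrt (∑ j : Fin ℓ, (α r j - β r j) ^ 2))
        Filter.atTop (nhds 0) ∧
      ∀ f : (Fin ℓ → ℝ) → ℂ, ContinuousOn f (Set.Icc (a 0) (b 0)) →
        Filter.Tendsto (fun r => f (α r) - f (β r)) Filter.atTop (nhds 0) := by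
  have hpos : ∀ r j, 0 < b r j - a r j := by
    intro r
    induction r with
    | zero => exact fun j => sub_pos.2 (h₀ j)
    | succ r ih =>
      intro j
      by_cases hj : j = i r
      · subst hj
        rcases hcut r with ⟨h1, h2⟩ | ⟨h1, h2⟩ <;> rw [h1, h2] <;> linarith [ih (i r)]
      · rw [(hfix r j hj).1, (hfix r j hj).2]
        exact ih j
  have hsub : ∀ r, Set.Icc (a r) (b r) ⊆ Set.Icc (a 0) (b 0) := by
    intro r
    induction r with
    | zero => exact subset_rfl
    | succ r ih =>
      refine (Set.Icc_subset_Icc ?_ ?_).trans ih <;> intro j <;> by_cases hj : j = i r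
      · subst hj
        rcases hcut r with ⟨h1, -⟩ | ⟨h1, -⟩ <;> rw [h1] <;> linarith [hpos r (i r)]
      · rw [(hfix r j hj).1]
      · subst hj
        rcases hcut r with ⟨-, h2⟩ | ⟨-, h2⟩ <;> rw [h2] <;> linarith [hpos r (i r)]
      · rw [(hfix r j hj).2]
  -- Relative side lengths, the reciprocals of the ratios in the fair-cut rule.
  let w : ℕ → Fin ℓ → ℝ := fun r j => (b r j - a r j) / (b 0 j - a 0 j)
  have hwpos : ∀ r j, 0 < w r j := fun r j => div_pos (hpos r j) (hpos 0 j)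
  have hw : Tendsto (fun r => w r (i r)) atTop (𝓝 0) := by
    refine tendsto_halved_coordinate (fun r j => (hwpos r j).le) ?_ ?_
    · intro r j hj
      simp only [w, (hfix r j hj).1, (hfix r j hj).2]
    · intro r
      simp only [w]
      rcases hcut r with ⟨h1, h2⟩ | ⟨h1, h2⟩ <;> rw [h1, h2] <;> ring
  have hmax : ∀ r, ∀ j ∈ U r, w r j ≤ w r (i r) := by
    intro r j hj
    have h := (hfair r).trans_le (Finset.inf'_le _ hj)
    rw [← inv_div, ← inv_div (b r j - a r j)] at h
    exact (inv_le_inv₀ (hwpos r (i r)) (hwpos r j)).1 h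
  have hbound : ∀ r j, |α r j - β r j| ≤ (b 0 j - a 0 j) * w r (i r) := by
    intro r j
    by_cases hj : j ∈ U r
    · calc |α r j - β r j| ≤ b r j - a r j :=
            abs_sub_le_iff.2 ⟨by linarith [(hα r).2 j, (hβ r).1 j],
              by linarith [(hα r).1 j, (hβ r).2 j]⟩
        _ = (b 0 j - a 0 j) * w r j := (mul_div_cancel₀ _ (hpos 0 j).ne').symm
        _ ≤ (b 0 j - a 0 j) * w r (i r) :=
            mul_le_mul_of_nonneg_left (hmax r j hj) (hpos 0 j).le
    · rw [hagree r j hj, sub_self, abs_zero]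
      exact mul_nonneg (hpos 0 j).le (hwpos r (i r)).le
  have hcoord : ∀ j, Tendsto (fun r => α r j - β r j) atTop (𝓝 0) := by
    intro j
    refine squeeze_zero_norm (fun r => hbound r j) ?_
    simpa using hw.const_mul (b 0 j - a 0 j)
  constructor
  · have h := (tendsto_finsetSum Finset.univ fun j _ => (hcoord j).pow 2).sqrt
    simpa using h
  · intro f hf
    refine hf.tendsto_sub_of_tendsto_dist isCompact_Icc (fun r => hsub r (hα r))
      (fun r => hsub r (hβ r)) ?_
    have h := (tendsto_pi_nhds.2 hcoord : Tendsto (fun r => α r - β r) atTop (𝓝 0)).norm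
    simpa [dist_eq_norm] using h
end

section
/- (Structure of the zero-inclusion set) Let f : (Fin ℓ → ℝ) → ℂ be continuous, let Q ⊆ (Fin ℓ → ℝ) be compact and convex, and let q⁰ ∈ Q. Then the set T := {κ : ℝ | 0 ≤ κ ∧ 0 ∈ f '' (κ-inflation of Q about q⁰)} is closed, and it is upward closed: if κ ∈ T and κ' ≥ κ then κ' ∈ T. -/
/-- The parameters at which a jointly continuous family attains a given value on a compact set form
a closed set. -/
theorem isClosed_setOf_exists_mem_eq_of_isCompact {X Y Z : Type*} [TopologicalSpace X]
    [TopologicalSpace Y] [TopologicalSpace Z] [T1Space Z] {g : X × Y → Z} (hg : Continuous g)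
    {K : Set Y} (hK : IsCompact K) (z : Z) : IsClosed {x | ∃ y ∈ K, g (x, y) = z} := by
  have : CompactSpace K := isCompact_iff_compactSpace.mp hK
  have hclosed : IsClosed {p : X × K | g (p.1, p.2) = z} :=
    isClosed_singleton.preimage (f := fun p : X × K => g (p.1, p.2)) (by fun_prop)
  convert isClosedMap_fst_of_compactSpace _ hclosed using 1
  ext x
  simp

/-- Inflations of a convex set about one of its points increase with the factor. -/
theorem Convex.image_inflation_subset {E : Type*} [AddCommGroup E] [Module ℝ E] {Q : Set E}
    (hQ : Convex ℝ Q) {q₀ : E} (hq₀ : q₀ ∈ Q) {κ κ' : ℝ} (hκ : 0 ≤ κ) (hκκ' : κ ≤ κ') :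
    (fun q => q₀ + κ • (q - q₀)) '' Q ⊆ (fun q => q₀ + κ' • (q - q₀)) '' Q := by
  rintro _ ⟨q, hq, rfl⟩
  refine ⟨q₀ + (κ / κ') • (q - q₀), hQ.add_smul_sub_mem hq₀ hq
    ⟨div_nonneg hκ (hκ.trans hκκ'), div_le_one_of_le₀ hκκ' (hκ.trans hκκ')⟩, ?_⟩
  have hmul : κ' * (κ / κ') = κ := mul_div_cancel_of_imp' fun h => le_antisymm (h ▸ hκκ') hκ
  simp only [add_sub_cancel_left, smul_smul, hmul]

/-- **Structure of the zero-inclusion set.** For `f` continuous, `Q` compact convex and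
`q⁰ ∈ Q`, the set of nonnegative inflations `κ` at which the value set of the
`κ`-inflated `Q` contains the origin is closed and upward closed. -/
theorem zero_inclusion_set_structure (ℓ : ℕ) (f : (Fin ℓ → ℝ) → ℂ)
    (hf : Continuous f) (Q : Set (Fin ℓ → ℝ)) (hQc : IsCompact Q) (hQconv : Convex ℝ Q)
    (q₀ : Fin ℓ → ℝ) (hq₀ : q₀ ∈ Q) :
    IsClosed {κ : ℝ | 0 ≤ κ ∧
        (0 : ℂ) ∈ f '' ((fun q => q₀ + κ • (q - q₀)) '' Q)} ∧
      ∀ κ ∈ {κ : ℝ | 0 ≤ κ ∧ (0 : ℂ) ∈ f '' ((fun q => q₀ + κ • (q - q₀)) '' Q)},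
        ∀ κ' : ℝ, κ ≤ κ' →
          κ' ∈ {κ : ℝ | 0 ≤ κ ∧ (0 : ℂ) ∈ f '' ((fun q => q₀ + κ • (q - q₀)) '' Q)} := by
  refine ⟨?_, fun κ hκ κ' hκκ' => ⟨hκ.1.trans hκκ',
    Set.image_mono (hQconv.image_inflation_subset hq₀ hκ.1 hκκ') hκ.2⟩⟩
  have hclosed := isClosed_setOf_exists_mem_eq_of_isCompact
    (g := fun p : ℝ × (Fin ℓ → ℝ) => f (q₀ + p.1 • (p.2 - q₀))) (by fun_prop) hQc 0
  simp only [Set.image_image]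
  exact isClosed_Ici.inter hclosed
end
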